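/- arXiv:1602.04385 — 4 statements merged into one kernel-verified Lean document; each statement's English description precedes it below -/
import Mathlib

section
/- Let X_r, X_{r+1}, Y, Y′ be real vector spaces, b : Y × X_r → ℝ and b′ : Y′ × X_{r+1} → ℝ bilinear maps, d : X_r → X_{r+1} and d_Y : Y′ → Y linear maps, and ε ∈ {−1, 1} a sign such that the integration-by-parts identity b(d_Y α, x) = ε · b′(α, d x) holds for all α ∈ Y′ and x ∈ X_r. Let W_r ⊆ X_r and W_{r+1} ⊆ X_{r+1} be finite-dimensional subspaces with d(W_r) ⊆ W_{r+1}, and let M ⊆ Y and M′ ⊆ Y′ be finite-dimensional subspaces with d_Y(M′) ⊆ M, dim M = dim W_r, dim M′ = dim W_{r+1}, such that b is nondegenerate on M × W_r and b′ is nondegenerate on M′ × W_{r+1}. Let Q_r : X_r → W_r be the projection-based coupling operator determined by b and M, and Q_{r+1} : X_{r+1} → W_{r+1} the one determined by b′ and M′. Then d ∘ Q_r = Q_{r+1} ∘ d on X_r. -/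
section Semiring

variable {R X X' Y Y' N : Type*} [CommSemiring R]
  [AddCommMonoid X] [Module R X] [AddCommMonoid X'] [Module R X']
  [AddCommMonoid Y] [Module R Y] [AddCommMonoid Y'] [Module R Y']
  [AddCommMonoid N] [Module R N]

/-- `w` is a value at `x` of the projection-based coupling operator determined by the pairing `b`,
the target space `W` and the multiplier space `M`. Being a relation, it presupposes neither
existence nor uniqueness of such a `w`. -/
structure IsCouplingProjection (b : Y →ₗ[R] X →ₗ[R] N) (W : Submodule R X) (M : Submodule R Y)
    (x w : X) : Prop where
  mem : w ∈ W
  pairing_eq : ∀ β ∈ M, b β w = b β x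

theorem IsCouplingProjection.map {b : Y →ₗ[R] X →ₗ[R] N} {b' : Y' →ₗ[R] X' →ₗ[R] N}
    {d : X →ₗ[R] X'} {dY : Y' →ₗ[R] Y} {ε : R} (hε : IsSMulRegular N ε)
    (hibp : ∀ α x, b (dY α) x = ε • b' α (d x))
    {W : Submodule R X} {W' : Submodule R X'} (hdW : W.map d ≤ W')
    {M : Submodule R Y} {M' : Submodule R Y'} (hdM : M'.map dY ≤ M)
    {x w : X} (h : IsCouplingProjection b W M x w) :
    IsCouplingProjection b' W' M' (d x) (d w) where
  mem := hdW (Submodule.mem_map_of_mem h.mem)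
  pairing_eq α hα := hε <| calc
    ε • b' α (d w) = b (dY α) w := (hibp α w).symm
    _ = b (dY α) x := h.pairing_eq _ (hdM (Submodule.mem_map_of_mem hα))
    _ = ε • b' α (d x) := hibp α x

end Semiring

theorem IsCouplingProjection.unique {R X Y N : Type*} [CommRing R]
    [AddCommGroup X] [Module R X] [AddCommMonoid Y] [Module R Y] [AddCommGroup N] [Module R N]
    {b : Y →ₗ[R] X →ₗ[R] N} {W : Submodule R X} {M : Submodule R Y}
    (hnd : ∀ w ∈ W, (∀ β ∈ M, b β w = 0) → w = 0) {x w₁ w₂ : X}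
    (h₁ : IsCouplingProjection b W M x w₁) (h₂ : IsCouplingProjection b W M x w₂) : w₁ = w₂ := by
  refine sub_eq_zero.mp (hnd _ (W.sub_mem h₁.mem h₂.mem) fun β hβ => ?_)
  rw [map_sub, h₁.pairing_eq β hβ, h₂.pairing_eq β hβ, sub_self]

theorem coupling_operators_commute_with_exterior_derivative_general
    {R X X' Y Y' N : Type*} [CommRing R]
    [AddCommMonoid X] [Module R X] [AddCommGroup X'] [Module R X']
    [AddCommMonoid Y] [Module R Y] [AddCommMonoid Y'] [Module R Y']
    [AddCommGroup N] [Module R N]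
    {b : Y →ₗ[R] X →ₗ[R] N} {b' : Y' →ₗ[R] X' →ₗ[R] N}
    {d : X →ₗ[R] X'} {dY : Y' →ₗ[R] Y} {ε : R} (hε : IsSMulRegular N ε)
    (hibp : ∀ α x, b (dY α) x = ε • b' α (d x))
    {W : Submodule R X} {W' : Submodule R X'} (hdW : W.map d ≤ W')
    {M : Submodule R Y} {M' : Submodule R Y'} (hdM : M'.map dY ≤ M)
    (hnd' : ∀ w ∈ W', (∀ α ∈ M', b' α w = 0) → w = 0)
    {Q : X → X} (hQ : ∀ x, IsCouplingProjection b W M x (Q x))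
    {Q' : X' → X'} (hQ' : ∀ x, IsCouplingProjection b' W' M' x (Q' x)) (x : X) :
    d (Q x) = Q' (d x) :=
  ((hQ x).map hε hibp hdW hdM).unique hnd' (hQ' (d x))

/-- Commuting property of projection-based mesh coupling operators: if the
Lagrange multiplier spaces form a complex (`dY(M') ⊆ M`) and integration by
parts holds (`b (dY α) x = ε * b' α (d x)`), then the coupling operators
commute with the exterior derivative: `d ∘ Q_r = Q_{r+1} ∘ d`. -/
theorem coupling_operators_commute_with_exterior_derivative
    {Xr Xr1 Y Y' : Type*}
    [AddCommGroup Xr] [Module ℝ Xr] [AddCommGroup Xr1] [Module ℝ Xr1]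
    [AddCommGroup Y] [Module ℝ Y] [AddCommGroup Y'] [Module ℝ Y']
    (b : Y →ₗ[ℝ] Xr →ₗ[ℝ] ℝ) (b' : Y' →ₗ[ℝ] Xr1 →ₗ[ℝ] ℝ)
    (d : Xr →ₗ[ℝ] Xr1) (dY : Y' →ₗ[ℝ] Y)
    (ε : ℝ) (hε : ε = 1 ∨ ε = -1)
    (hibp : ∀ (α : Y') (x : Xr), b (dY α) x = ε * b' α (d x))
    (Wr : Submodule ℝ Xr) (Wr1 : Submodule ℝ Xr1)
    (hdW : Wr.map d ≤ Wr1)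
    (M : Submodule ℝ Y) (M' : Submodule ℝ Y')
    (hdM : M'.map dY ≤ M)
    [FiniteDimensional ℝ Wr] [FiniteDimensional ℝ Wr1]
    [FiniteDimensional ℝ M] [FiniteDimensional ℝ M']
    (hdim : Module.finrank ℝ M = Module.finrank ℝ Wr)
    (hdim' : Module.finrank ℝ M' = Module.finrank ℝ Wr1)
    (hnd : ∀ w ∈ Wr, (∀ β ∈ M, b β w = 0) → w = 0)
    (hnd' : ∀ w ∈ Wr1, (∀ α ∈ M', b' α w = 0) → w = 0)
    (Qr : Xr →ₗ[ℝ] Xr)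
    (hQrW : ∀ x, Qr x ∈ Wr)
    (hQr : ∀ x, ∀ β ∈ M, b β (Qr x) = b β x)
    (Qr1 : Xr1 →ₗ[ℝ] Xr1)
    (hQr1W : ∀ x, Qr1 x ∈ Wr1)
    (hQr1 : ∀ x, ∀ α ∈ M', b' α (Qr1 x) = b' α x) :
    ∀ x : Xr, d (Qr x) = Qr1 (d x) := by
  have hε_regular : IsSMulRegular ℝ ε :=
    IsSMulRegular.of_ne_zero (by rcases hε with rfl | rfl <;> norm_num)
  exact coupling_operators_commute_with_exterior_derivative_general hε_regular hibp hdW hdM hnd'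
    (fun x => ⟨hQrW x, hQr x⟩) (fun x => ⟨hQr1W x, hQr1 x⟩)
end

section
/- Let X and Y be real normed vector spaces, b : Y × X → ℝ a bilinear map that is continuous with constant C₂ > 0, i.e., |b(β, x)| ≤ C₂ ‖β‖ ‖x‖ for all β ∈ Y, x ∈ X. Let W ⊆ X and M ⊆ Y be finite-dimensional subspaces with dim M = dim W satisfying the discrete inf-sup condition with constant C₁ > 0: for every w ∈ W there exists β ∈ M, β ≠ 0, with b(β, w) ≥ (1/C₁) ‖β‖ ‖w‖. Then b is nondegenerate on M × W, so the projection-based coupling operator Q : X → W exists, and it is bounded with ‖Q x‖ ≤ C₁ C₂ ‖x‖ for all x ∈ X. -/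
/-!
The inf-sup condition makes `W → M*`, `w ↦ b(·, w)`, injective, and since `dim W = dim M` it is an
isomorphism; composing its inverse with `X → M*`, `x ↦ b(·, x)`, gives `Q`. For the bound, apply the
inf-sup condition to `Q x`: some nonzero `β ∈ M` satisfies
`‖β‖ ‖Q x‖ ≤ C₁ |b(β, Q x)| = C₁ |b(β, x)| ≤ C₁ C₂ ‖β‖ ‖x‖`, and `‖β‖` cancels.
-/

theorem isPerfPair_of_separatingRight_of_finrank_eq {K U V : Type*} [Field K]
    [AddCommGroup U] [Module K U] [AddCommGroup V] [Module K V] [FiniteDimensional K U]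
    {p : U →ₗ[K] V →ₗ[K] K} (hp : p.SeparatingRight)
    (hdim : Module.finrank K U = Module.finrank K V) : p.IsPerfPair := by
  have hinj : Function.Injective p.flip :=
    LinearMap.ker_eq_bot.mp (LinearMap.separatingRight_iff_flip_ker_eq_bot.mp hp)
  have : FiniteDimensional K V := .of_injective p.flip hinj
  have hdual : Module.finrank K V = Module.finrank K (Module.Dual K U) := by
    rw [Subspace.dual_finrank_eq, hdim]
  have hsurj : Function.Surjective p.flip :=
    (LinearMap.injective_iff_surjective_of_finrank_eq_finrank hdual).mp hinj
  exact .flip (.of_bijective p.flip ⟨hinj, hsurj⟩)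

section CouplingOperator

variable {R X Y : Type*} [CommRing R] [AddCommGroup X] [Module R X] [AddCommGroup Y] [Module R Y]
  (b : Y →ₗ[R] X →ₗ[R] R) (M : Submodule R Y) (W : Submodule R X)
  [(b.domRestrict₁₂ M W).IsPerfPair]

/-- The projection-based coupling operator `Q : X → W` of the pairing `b`, characterized by
`b(β, Q x) = b(β, x)` for `β ∈ M`. Existence is encoded by asking `b` to restrict to a perfect
pairing of `M` with `W`, so that functionals on `M` are represented by elements of `W`. -/
noncomputable def couplingOperator : X →ₗ[R] W :=
  (b.domRestrict₁₂ M W).flip.toPerfPair.symm.toLinearMap ∘ₗ (b.domRestrict M).flip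

theorem apply_couplingOperator {β : Y} (hβ : β ∈ M) (x : X) :
    b β (couplingOperator b M W x) = b β x :=
  (b.domRestrict₁₂ M W).apply_toPerfPair_flip ((b.domRestrict M).flip x) ⟨β, hβ⟩

end CouplingOperator

/-- The discrete inf-sup condition for the pairing `b` on `M × W`. The constant `C` is the inverse
of the usual inf-sup constant, and stands on the right so that no division by it occurs. -/
def IsInfSupStable {𝕜 X Y : Type*} [NormedField 𝕜]
    [SeminormedAddCommGroup X] [NormedSpace 𝕜 X] [SeminormedAddCommGroup Y] [NormedSpace 𝕜 Y]
    (b : Y →ₗ[𝕜] X →ₗ[𝕜] 𝕜) (M : Submodule 𝕜 Y) (W : Submodule 𝕜 X) (C : ℝ) : Prop :=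
  ∀ w ∈ W, ∃ β ∈ M, β ≠ 0 ∧ ‖β‖ * ‖w‖ ≤ C * ‖b β w‖

namespace IsInfSupStable

theorem of_one_div_mul_le {X Y : Type*}
    [SeminormedAddCommGroup X] [NormedSpace ℝ X] [SeminormedAddCommGroup Y] [NormedSpace ℝ Y]
    {b : Y →ₗ[ℝ] X →ₗ[ℝ] ℝ} {M : Submodule ℝ Y} {W : Submodule ℝ X} {C : ℝ} (hC : 0 < C)
    (h : ∀ w ∈ W, ∃ β ∈ M, β ≠ 0 ∧ (1 / C) * (‖β‖ * ‖w‖) ≤ b β w) :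
    IsInfSupStable b M W C := by
  intro w hw
  obtain ⟨β, hβ, hβ_ne, hle⟩ := h w hw
  refine ⟨β, hβ, hβ_ne, ?_⟩
  rw [← inv_mul_le_iff₀ hC, ← one_div]
  exact hle.trans (Real.le_norm_self _)

variable {𝕜 X Y : Type*} [NormedField 𝕜] [NormedAddCommGroup Y] [NormedSpace 𝕜 Y]

theorem norm_le_of_forall_apply_eq [SeminormedAddCommGroup X] [NormedSpace 𝕜 X]
    {b : Y →ₗ[𝕜] X →ₗ[𝕜] 𝕜} {M : Submodule 𝕜 Y} {W : Submodule 𝕜 X} {C₁ C₂ : ℝ}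
    (h : IsInfSupStable b M W C₁) (hC₁ : 0 ≤ C₁) {w x : X}
    (hcont : ∀ β ∈ M, ‖b β x‖ ≤ C₂ * ‖β‖ * ‖x‖)
    (hw : w ∈ W) (hwx : ∀ β ∈ M, b β w = b β x) : ‖w‖ ≤ C₁ * C₂ * ‖x‖ := by
  obtain ⟨β, hβ, hβ_ne, hle⟩ := h w hw
  refine le_of_mul_le_mul_left ?_ (norm_pos_iff.mpr hβ_ne)
  calc ‖β‖ * ‖w‖ ≤ C₁ * ‖b β w‖ := hle
    _ = C₁ * ‖b β x‖ := by rw [hwx β hβ]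
    _ ≤ C₁ * (C₂ * ‖β‖ * ‖x‖) := mul_le_mul_of_nonneg_left (hcont β hβ) hC₁
    _ = ‖β‖ * (C₁ * C₂ * ‖x‖) := by ring

variable [NormedAddCommGroup X] [NormedSpace 𝕜 X]
  {b : Y →ₗ[𝕜] X →ₗ[𝕜] 𝕜} {M : Submodule 𝕜 Y} {W : Submodule 𝕜 X} {C : ℝ}

theorem eq_zero_of_forall_apply_eq_zero (h : IsInfSupStable b M W C) {w : X} (hw : w ∈ W)
    (hw_zero : ∀ β ∈ M, b β w = 0) : w = 0 := by
  obtain ⟨β, hβ, hβ_ne, hle⟩ := h w hw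
  rw [hw_zero β hβ, norm_zero, mul_zero] at hle
  exact norm_le_zero_iff.mp (nonpos_of_mul_nonpos_right hle (norm_pos_iff.mpr hβ_ne))

theorem isPerfPair [FiniteDimensional 𝕜 M] (h : IsInfSupStable b M W C)
    (hdim : Module.finrank 𝕜 M = Module.finrank 𝕜 W) : (b.domRestrict₁₂ M W).IsPerfPair :=
  isPerfPair_of_separatingRight_of_finrank_eq
    (fun w hw ↦ Subtype.ext <| h.eq_zero_of_forall_apply_eq_zero w.2 fun β hβ ↦ hw ⟨β, hβ⟩) hdim

end IsInfSupStable

theorem coupling_operator_bounded_of_infsup_general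
    {𝕜 X Y : Type*} [NormedField 𝕜] [NormedAddCommGroup X] [NormedSpace 𝕜 X]
    [NormedAddCommGroup Y] [NormedSpace 𝕜 Y]
    (b : Y →ₗ[𝕜] X →ₗ[𝕜] 𝕜) {C₁ C₂ : ℝ} (hC₁ : 0 ≤ C₁)
    (hcont : ∀ (β : Y) (x : X), ‖b β x‖ ≤ C₂ * ‖β‖ * ‖x‖)
    {W : Submodule 𝕜 X} {M : Submodule 𝕜 Y} [FiniteDimensional 𝕜 M]
    (hdim : Module.finrank 𝕜 M = Module.finrank 𝕜 W)
    (hinfsup : IsInfSupStable b M W C₁) :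
    (∀ w ∈ W, (∀ β ∈ M, b β w = 0) → w = 0) ∧
    ∃ Q : X →ₗ[𝕜] X,
      (∀ x, Q x ∈ W) ∧
      (∀ x, ∀ β ∈ M, b β (Q x) = b β x) ∧
      (∀ x, ‖Q x‖ ≤ C₁ * C₂ * ‖x‖) := by
  have := hinfsup.isPerfPair hdim
  have hQ_mem (x : X) : (couplingOperator b M W x : X) ∈ W := (couplingOperator b M W x).2
  have hQ (x : X) : ∀ β ∈ M, b β (couplingOperator b M W x) = b β x :=
    fun _ hβ ↦ apply_couplingOperator b M W hβ x
  exact ⟨fun _ ↦ hinfsup.eq_zero_of_forall_apply_eq_zero,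
    W.subtype ∘ₗ couplingOperator b M W, hQ_mem, hQ,
    fun x ↦ hinfsup.norm_le_of_forall_apply_eq hC₁ (fun β _ ↦ hcont β x) (hQ_mem x) (hQ x)⟩

/-- Inf-sup stability and continuity imply nondegeneracy of the pairing on
`M × W`, hence existence of the projection-based coupling operator `Q`, which
is bounded with `‖Q x‖ ≤ C₁ C₂ ‖x‖`. -/
theorem coupling_operator_bounded_of_infsup
    {X Y : Type*} [NormedAddCommGroup X] [NormedSpace ℝ X]
    [NormedAddCommGroup Y] [NormedSpace ℝ Y]
    (b : Y →ₗ[ℝ] X →ₗ[ℝ] ℝ)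
    (C₁ C₂ : ℝ) (hC₁ : 0 < C₁) (hC₂ : 0 < C₂)
    (hcont : ∀ (β : Y) (x : X), |b β x| ≤ C₂ * ‖β‖ * ‖x‖)
    (W : Submodule ℝ X) (M : Submodule ℝ Y)
    [FiniteDimensional ℝ W] [FiniteDimensional ℝ M]
    (hdim : Module.finrank ℝ M = Module.finrank ℝ W)
    (hinfsup : ∀ w ∈ W, ∃ β ∈ M, β ≠ 0 ∧ (1 / C₁) * (‖β‖ * ‖w‖) ≤ b β w) :
    (∀ w ∈ W, (∀ β ∈ M, b β w = 0) → w = 0) ∧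
    ∃ Q : X →ₗ[ℝ] X,
      (∀ x, Q x ∈ W) ∧
      (∀ x, ∀ β ∈ M, b β (Q x) = b β x) ∧
      (∀ x, ‖Q x‖ ≤ C₁ * C₂ * ‖x‖) :=
  coupling_operator_bounded_of_infsup_general b hC₁.le hcont hdim
    (.of_one_div_mul_le hC₁ hinfsup)
end

section
/- Let X and Y be real normed vector spaces, b : Y × X → ℝ a bilinear map that is continuous with constant C₂ > 0, i.e., |b(β, x)| ≤ C₂ ‖β‖ ‖x‖ for all β ∈ Y, x ∈ X. Let W ⊆ X and M ⊆ Y be finite-dimensional subspaces with dim M = dim W satisfying the discrete inf-sup condition with constant C₁ > 0: for every w ∈ W there exists β ∈ M, β ≠ 0, with b(β, w) ≥ (1/C₁) ‖β‖ ‖w‖. Let Q : X → W be the projection-based coupling operator. Then the projection error is bounded by the best approximation error: for every x ∈ X, ‖Q x − x‖ ≤ (1 + C₁ C₂) · inf_{η ∈ W} ‖x − η‖. -/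
/-!
For `η ∈ W` the vectors `Q x - η ∈ W` and `x - η` pair identically with all of `M`. Testing the
inf-sup condition at `Q x - η` therefore bounds it by `x - η` through the continuity of `b`, and the
triangle inequality through `η` costs the additional `1` in the constant.
-/

section QuasiOptimality

variable {𝕜 X Y : Type*} [NormedField 𝕜] [SeminormedAddCommGroup X] [NormedSpace 𝕜 X]
  [NormedAddCommGroup Y] [NormedSpace 𝕜 Y] {b : Y →ₗ[𝕜] X →ₗ[𝕜] 𝕜} {C₁ C₂ : ℝ}

theorem norm_le_of_pairing_eq {β : Y} {w e : X} (hC₁ : 0 < C₁) (hβ : β ≠ 0)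
    (hlower : (1 / C₁) * (‖β‖ * ‖w‖) ≤ ‖b β w‖) (hupper : ‖b β e‖ ≤ C₂ * ‖β‖ * ‖e‖)
    (hpair : b β w = b β e) : ‖w‖ ≤ C₁ * C₂ * ‖e‖ := by
  have hscaled : ‖β‖ * ‖w‖ ≤ ‖β‖ * (C₁ * C₂ * ‖e‖) :=
    calc
      ‖β‖ * ‖w‖ = C₁ * ((1 / C₁) * (‖β‖ * ‖w‖)) := by field_simp
      _ ≤ C₁ * ‖b β w‖ := by gcongr
      _ = C₁ * ‖b β e‖ := by rw [hpair]
      _ ≤ C₁ * (C₂ * ‖β‖ * ‖e‖) := by gcongr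
      _ = ‖β‖ * (C₁ * C₂ * ‖e‖) := by ring
  exact le_of_mul_le_mul_left hscaled (norm_pos_iff.mpr hβ)

variable {W : Submodule 𝕜 X} {M : Submodule 𝕜 Y}

theorem norm_sub_le_of_forall_pairing_eq (hC₁ : 0 < C₁)
    (hcont : ∀ (β : Y) (x : X), ‖b β x‖ ≤ C₂ * ‖β‖ * ‖x‖)
    (hinfsup : ∀ w ∈ W, ∃ β ∈ M, β ≠ 0 ∧ (1 / C₁) * (‖β‖ * ‖w‖) ≤ ‖b β w‖)
    {u x η : X} (hu : u ∈ W) (hη : η ∈ W) (hpair : ∀ β ∈ M, b β u = b β x) :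
    ‖u - x‖ ≤ (1 + C₁ * C₂) * ‖x - η‖ := by
  obtain ⟨β, hβM, hβ, hlower⟩ := hinfsup (u - η) (W.sub_mem hu hη)
  have hpair_sub : b β (u - η) = b β (x - η) := by rw [map_sub, map_sub, hpair β hβM]
  have hstable : ‖u - η‖ ≤ C₁ * C₂ * ‖x - η‖ :=
    norm_le_of_pairing_eq hC₁ hβ hlower (hcont β (x - η)) hpair_sub
  calc
    ‖u - x‖ ≤ ‖u - η‖ + ‖η - x‖ := norm_sub_le_norm_sub_add_norm_sub u η x
    _ = ‖u - η‖ + ‖x - η‖ := by rw [norm_sub_rev η x]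
    _ ≤ C₁ * C₂ * ‖x - η‖ + ‖x - η‖ := by gcongr
    _ = (1 + C₁ * C₂) * ‖x - η‖ := by ring

theorem coupling_operator_quasi_optimal_general (hC₁ : 0 < C₁) (hC₂ : 0 ≤ C₂)
    (hcont : ∀ (β : Y) (x : X), ‖b β x‖ ≤ C₂ * ‖β‖ * ‖x‖)
    (hinfsup : ∀ w ∈ W, ∃ β ∈ M, β ≠ 0 ∧ (1 / C₁) * (‖β‖ * ‖w‖) ≤ ‖b β w‖)
    {Q : X → X} (hQW : ∀ x, Q x ∈ W) (hQ : ∀ x, ∀ β ∈ M, b β (Q x) = b β x) (x : X) :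
    ‖Q x - x‖ ≤ (1 + C₁ * C₂) * ⨅ η : W, ‖x - (η : X)‖ := by
  rw [Real.mul_iInf_of_nonneg (by positivity)]
  exact le_ciInf fun η =>
    norm_sub_le_of_forall_pairing_eq hC₁ hcont hinfsup (hQW x) η.2 (hQ x)

end QuasiOptimality

/-- Quasi-optimal projection: under inf-sup stability and continuity of the
pairing, the projection error of the coupling operator is bounded by the best
approximation error, `‖Q x − x‖ ≤ (1 + C₁ C₂) inf_{η ∈ W} ‖x − η‖`. -/
theorem coupling_operator_quasi_optimal
    {X Y : Type*} [NormedAddCommGroup X] [NormedSpace ℝ X]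
    [NormedAddCommGroup Y] [NormedSpace ℝ Y]
    (b : Y →ₗ[ℝ] X →ₗ[ℝ] ℝ)
    (C₁ C₂ : ℝ) (hC₁ : 0 < C₁) (hC₂ : 0 < C₂)
    (hcont : ∀ (β : Y) (x : X), |b β x| ≤ C₂ * ‖β‖ * ‖x‖)
    (W : Submodule ℝ X) (M : Submodule ℝ Y)
    [FiniteDimensional ℝ W] [FiniteDimensional ℝ M]
    (hdim : Module.finrank ℝ M = Module.finrank ℝ W)
    (hinfsup : ∀ w ∈ W, ∃ β ∈ M, β ≠ 0 ∧ (1 / C₁) * (‖β‖ * ‖w‖) ≤ b β w)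
    (Q : X →ₗ[ℝ] X)
    (hQW : ∀ x, Q x ∈ W)
    (hQ : ∀ x, ∀ β ∈ M, b β (Q x) = b β x) :
    ∀ x : X, ‖Q x - x‖ ≤ (1 + C₁ * C₂) * ⨅ η : W, ‖x - (η : X)‖ :=
  coupling_operator_quasi_optimal_general hC₁ hC₂.le hcont
    (fun w hw => (hinfsup w hw).imp fun _ h => ⟨h.1, h.2.1, h.2.2.trans (le_abs_self _)⟩) hQW hQ
end

section
/- Let V⁰ and V¹ be real vector spaces and d : V⁰ → V¹ a linear map whose kernel is the one-dimensional span of a fixed element 𝟙 ∈ V⁰. Let T and S be finite index sets, D : S × T → ℝ a matrix with Σ_{t ∈ T} D_{st} = 0 for every s ∈ S, and (μ⁰_t)_{t ∈ T}, (μ¹_s)_{s ∈ S} families in V⁰ and V¹ with d μ⁰_t = − Σ_{s ∈ S} D_{st} μ¹_s for all t ∈ T. Assume further that there exist t₀ ∈ T and a linear functional ℓ on V⁰ with ℓ(μ⁰_t) = δ_{t t₀} for all t ∈ T and ℓ(𝟙) = 1. Then Σ_{t ∈ T} μ⁰_t = 𝟙; in particular d(Σ_{t ∈ T} μ⁰_t)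 = 0. -/
section

variable {R V0 V1 T S : Type*} [Semiring R] [AddCommMonoid V0] [Module R V0]
  [AddCommGroup V1] [Module R V1] [Fintype T] [Fintype S]

theorem eq_apply_smul_of_mem_span_singleton {ell : V0 →ₗ[R] R} {e x : V0}
    (he : ell e = 1) (hx : x ∈ Submodule.span R {e}) : x = ell x • e := by
  obtain ⟨c, rfl⟩ := Submodule.mem_span_singleton.mp hx
  rw [map_smul, he, smul_eq_mul, mul_one]

theorem map_sum_eq_neg_sum_row_sum_smul (d : V0 →ₗ[R] V1) {D : S → T → R}
    {μ0 : T → V0} {μ1 : S → V1} (hd : ∀ t, d (μ0 t) = -∑ s, D s t • μ1 s) :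
    d (∑ t, μ0 t) = -∑ s, (∑ t, D s t) • μ1 s :=
  calc
    d (∑ t, μ0 t) = -∑ t, ∑ s, D s t • μ1 s := by
      simp only [map_sum, hd, Finset.sum_neg_distrib]
    _ = -∑ s, ∑ t, D s t • μ1 s := by rw [Finset.sum_comm]
    _ = -∑ s, (∑ t, D s t) • μ1 s := by simp only [Finset.sum_smul]

theorem BC_partition_of_unity_general (d : V0 →ₗ[R] V1) (one : V0)
    (hker : LinearMap.ker d ≤ Submodule.span R {one})
    (D : S → T → R) (hD : ∀ s, ∑ t, D s t = 0) (μ0 : T → V0) (μ1 : S → V1)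
    (hd : ∀ t, d (μ0 t) = -∑ s, D s t • μ1 s)
    (ell : V0 →ₗ[R] R) (hell : ∑ t, ell (μ0 t) = 1) (hone : ell one = 1) :
    (∑ t, μ0 t) = one ∧ d (∑ t, μ0 t) = 0 := by
  have hclosed : d (∑ t, μ0 t) = 0 := by
    simp only [map_sum_eq_neg_sum_row_sum_smul d hd, hD, zero_smul, Finset.sum_const_zero,
      neg_zero]
  have hmem : ∑ t, μ0 t ∈ Submodule.span R {one} := hker (LinearMap.mem_ker.mpr hclosed)
  refine ⟨?_, hclosed⟩
  calc ∑ t, μ0 t = ell (∑ t, μ0 t) • one := eq_apply_smul_of_mem_span_singleton hone hmem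
    _ = one := by rw [map_sum, hell, one_smul]

end

/-- Partition of Unity for the Buffa-Christiansen 0-forms on a connected
interface without boundary: if the rows of the edge-facet incidence matrix sum
to zero, the kernel of the surface gradient is spanned by the constant
function, and one de Rham degree of freedom normalizes the family, then
`Σ_t μ⁰_t = 𝟙`; in particular `d (Σ_t μ⁰_t) = 0`. -/
theorem BC_partition_of_unity
    {V0 V1 : Type*}
    [AddCommGroup V0] [Module ℝ V0] [AddCommGroup V1] [Module ℝ V1]
    (d : V0 →ₗ[ℝ] V1) (one : V0) (hone_ne : one ≠ 0)
    (hker : LinearMap.ker d = Submodule.span ℝ {one})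
    {T S : Type*} [Fintype T] [Fintype S] [DecidableEq T]
    (D : S → T → ℝ) (hD : ∀ s, ∑ t, D s t = 0)
    (μ0 : T → V0) (μ1 : S → V1)
    (hd : ∀ t, d (μ0 t) = -∑ s, D s t • μ1 s)
    (t₀ : T) (ell : V0 →ₗ[ℝ] ℝ)
    (hell : ∀ t, ell (μ0 t) = if t = t₀ then 1 else 0)
    (hone : ell one = 1) :
    (∑ t, μ0 t) = one ∧ d (∑ t, μ0 t) = 0 :=
  BC_partition_of_unity_general d one hker.le D hD μ0 μ1 hd ell (by simp [hell]) hone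
end
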